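/- Let X, Y, Z be real Banach spaces, let U ⊆ X and V ⊆ Y be open neighborhoods of the origins, let n ∈ ℕ, and let G : U × V → Z and F : Z × U × V → ℝⁿ be continuously Fréchet differentiable maps satisfying: G(0,0) = 0; F(0,x,y) = 0 for all (x,y) ∈ U × V; and F(G(x,y),x,y) = 0 for all (x,y) ∈ U × V. Assume moreover that the partial Fréchet derivative D_yG(0,0) : Y → Z is injective, that the range of D_yG(0,0) has codimension n in Z, and that D_zF(0,0,0) : Z → ℝⁿ is surjective. Then there exist open neighborhoods Ũ ⊆ U and Ṽ ⊆ V of the origins and a continuously differentiable map g : Ũ → Ṽ such that g(0) = 0 and G(x, g(x)) = 0 for all x ∈ Ũ; moreover every (x,y) ∈ Ũ × Ṽ with G(x,y) = 0 satisfies y = g(x), and the derivative of g at 0 satisfies D_xG(0,0) + D_yG(0,0) ∘ D_xg(0) = 0. -/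

import Mathlib

open Set

/-- A generalization of the implicit function theorem in which the partial
derivative `D_y G(0,0)` fails to be surjective by exactly `n` dimensions, the
deficiency being explained by the nonlinear identity `F(G(x,y),x,y) = 0`. -/
theorem modified_implicit_function_theorem
    {X Y Z : Type*}
    [NormedAddCommGroup X] [NormedSpace ℝ X] [CompleteSpace X]
    [NormedAddCommGroup Y] [NormedSpace ℝ Y] [CompleteSpace Y]
    [NormedAddCommGroup Z] [NormedSpace ℝ Z] [CompleteSpace Z]
    (n : ℕ)
    (U : Set X) (V : Set Y) (hU : IsOpen U) (hV : IsOpen V)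
    (hU0 : (0 : X) ∈ U) (hV0 : (0 : Y) ∈ V)
    (G : X × Y → Z) (F : Z × X × Y → (Fin n → ℝ))
    (hG : ContDiffOn ℝ 1 G (U ×ˢ V))
    (hF : ContDiffOn ℝ 1 F ((univ : Set Z) ×ˢ U ×ˢ V))
    (hG00 : G (0, 0) = 0)
    (hF0 : ∀ x ∈ U, ∀ y ∈ V, F (0, x, y) = 0)
    (hFG : ∀ x ∈ U, ∀ y ∈ V, F (G (x, y), x, y) = 0)
    (DxG : X →L[ℝ] Z) (DyG : Y →L[ℝ] Z) (DzF : Z →L[ℝ] (Fin n → ℝ))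
    (hDxG : HasFDerivAt (fun x => G (x, 0)) DxG 0)
    (hDyG : HasFDerivAt (fun y => G (0, y)) DyG 0)
    (hDzF : HasFDerivAt (fun z => F (z, 0, 0)) DzF 0)
    (hinj : Function.Injective DyG)
    (hcodim : Module.rank ℝ (Z ⧸ LinearMap.range (DyG : Y →ₗ[ℝ] Z)) = n)
    (hsurj : Function.Surjective DzF) :
    ∃ (U' : Set X) (V' : Set Y) (g : X → Y),
      IsOpen U' ∧ IsOpen V' ∧ (0 : X) ∈ U' ∧ (0 : Y) ∈ V' ∧ U' ⊆ U ∧ V' ⊆ V ∧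
      ContDiffOn ℝ 1 g U' ∧ g 0 = 0 ∧
      (∀ x ∈ U', g x ∈ V' ∧ G (x, g x) = 0) ∧
      (∀ x ∈ U', ∀ y ∈ V', G (x, y) = 0 → y = g x) ∧
      ∃ Dg : X →L[ℝ] Y, HasFDerivAt g Dg 0 ∧ ∀ x, DxG x + DyG (Dg x) = 0 := by
  classical
  -- derivative of G
  have hGat : ContDiffAt ℝ 1 G (0, 0) :=
    hG.contDiffAt ((hU.prod hV).mem_nhds ⟨hU0, hV0⟩)
  have hFat : ContDiffAt ℝ 1 F (0, 0, 0) :=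
    hF.contDiffAt ((isOpen_univ.prod (hU.prod hV)).mem_nhds ⟨mem_univ _, hU0, hV0⟩)
  have hG's := hGat.hasStrictFDerivAt one_ne_zero
  have hF's := hFat.hasStrictFDerivAt one_ne_zero
  set G' := fderiv ℝ G (0, 0) with hG'def
  set F' := fderiv ℝ F (0, 0, 0) with hF'def
  have hG' : HasFDerivAt G G' (0, 0) := hG's.hasFDerivAt
  have hF' : HasFDerivAt F F' (0, 0, 0) := hF's.hasFDerivAt
  have hGx : ∀ x, G' (x, 0) = DxG x := by
    intro x
    have h1 : HasFDerivAt (fun x : X => ((x, 0) : X × Y)) (ContinuousLinearMap.inl ℝ X Y) 0 :=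
      (ContinuousLinearMap.inl ℝ X Y).hasFDerivAt
    have h2 := HasFDerivAt.comp (g := G) (0 : X) hG' h1
    have h3 := h2.unique hDxG
    rw [← h3]; simp
  have hGy : ∀ y, G' (0, y) = DyG y := by
    intro y
    have h1 : HasFDerivAt (fun y : Y => ((0, y) : X × Y)) (ContinuousLinearMap.inr ℝ X Y) 0 :=
      (ContinuousLinearMap.inr ℝ X Y).hasFDerivAt
    have h2 := HasFDerivAt.comp (g := G) (0 : Y) hG' h1
    have h3 := h2.unique hDyG
    rw [← h3]; simp
  have hFz : ∀ z, F' (z, 0) = DzF z := by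
    intro z
    have h1 : HasFDerivAt (fun z : Z => ((z, 0) : Z × X × Y))
        (ContinuousLinearMap.inl ℝ Z (X × Y)) 0 :=
      (ContinuousLinearMap.inl ℝ Z (X × Y)).hasFDerivAt
    have h2 := HasFDerivAt.comp (g := F) (0 : Z) hF' h1
    have h3 := h2.unique hDzF
    rw [← h3]; simp
  have hUV : ∀ᶠ p : X × Y in nhds (0, 0), p.1 ∈ U ∧ p.2 ∈ V :=
    (hU.prod hV).mem_nhds ⟨hU0, hV0⟩
  have hFxy : ∀ p : X × Y, F' (0, p) = 0 := by
    intro p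
    have h1 : HasFDerivAt (fun p : X × Y => ((0, p) : Z × X × Y))
        (ContinuousLinearMap.inr ℝ Z (X × Y)) (0, 0) :=
      (ContinuousLinearMap.inr ℝ Z (X × Y)).hasFDerivAt
    have h2 := HasFDerivAt.comp (g := F) ((0, 0) : X × Y) hF' h1
    have h4 : HasFDerivAt (F ∘ fun p : X × Y => ((0, p) : Z × X × Y))
        (0 : X × Y →L[ℝ] (Fin n → ℝ)) (0, 0) := by
      refine (hasFDerivAt_const (0 : Fin n → ℝ) _).congr_of_eventuallyEq ?_
      filter_upwards [hUV] with p hp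
      exact hF0 _ hp.1 _ hp.2
    have h3 := h2.unique h4
    have := congrArg (fun L => L p) h3
    simpa using this
  have hFG' : ∀ p : X × Y, DzF (G' p) = 0 := by
    intro p
    have h1 : HasFDerivAt (fun p : X × Y => ((G p, p) : Z × X × Y))
        (G'.prod (ContinuousLinearMap.id ℝ (X × Y))) (0, 0) :=
      hG'.prodMk (hasFDerivAt_id _)
    have hF'' : HasFDerivAt F F' (G (0, 0), (0, 0)) := by rw [hG00]; exact hF'
    have h2 := HasFDerivAt.comp (g := F) (f := fun p : X × Y => ((G p, p) : Z × X × Y)) (0, 0) hF'' h1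
    have h4 : HasFDerivAt (F ∘ fun p : X × Y => ((G p, p) : Z × X × Y))
        (0 : X × Y →L[ℝ] (Fin n → ℝ)) (0, 0) := by
      refine (hasFDerivAt_const (0 : Fin n → ℝ) _).congr_of_eventuallyEq ?_
      filter_upwards [hUV] with p hp
      exact hFG _ hp.1 _ hp.2
    have h3 := h2.unique h4
    have h5 : F' (G' p, p) = 0 := by
      have := congrArg (fun L => L p) h3
      simpa using this
    have h6 : ((G' p, p) : Z × X × Y) = (G' p, 0) + (0, p) := by simp
    rw [h6, map_add, hFz, hFxy, add_zero] at h5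
    exact h5
  -- range of DyG is the kernel of DzF
  have hker : ∀ z, DzF z = 0 → ∃ y, DyG y = z := by
    intro z hz
    have hle : LinearMap.range (DyG : Y →ₗ[ℝ] Z) ≤ LinearMap.ker (DzF : Z →ₗ[ℝ] (Fin n → ℝ)) := by
      rintro _ ⟨y, rfl⟩
      have := hFG' (0, y)
      rw [hGy] at this
      simpa using this
    let q := (LinearMap.range (DyG : Y →ₗ[ℝ] Z)).liftQ (DzF : Z →ₗ[ℝ] (Fin n → ℝ)) hle
    have hqs : Function.Surjective q := by
      intro w
      obtain ⟨z, hz⟩ := hsurj w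
      exact ⟨Submodule.Quotient.mk z, by simpa [q] using hz⟩
    have hfin : Module.Finite ℝ (Z ⧸ LinearMap.range (DyG : Y →ₗ[ℝ] Z)) := by
      rw [← Module.rank_lt_aleph0_iff, hcodim]
      exact Cardinal.natCast_lt_aleph0
    have hfr : Module.finrank ℝ (Z ⧸ LinearMap.range (DyG : Y →ₗ[ℝ] Z))
        = Module.finrank ℝ (Fin n → ℝ) := by
      rw [Module.finrank_eq_of_rank_eq hcodim]; simp
    have hqi : Function.Injective q :=
      (LinearMap.injective_iff_surjective_of_finrank_eq_finrank hfr).2 hqs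
    have h0 : q (Submodule.Quotient.mk z) = q 0 := by
      rw [map_zero]; simpa [q] using hz
    have h1 := hqi h0
    rw [Submodule.Quotient.mk_eq_zero] at h1
    simpa using h1
  -- right inverse of DzF
  obtain ⟨R0, hR0⟩ := LinearMap.exists_rightInverse_of_surjective
    (DzF : Z →ₗ[ℝ] (Fin n → ℝ)) (LinearMap.range_eq_top.2 hsurj)
  let R : (Fin n → ℝ) →L[ℝ] Z := LinearMap.toContinuousLinearMap R0
  have hR : ∀ w, DzF (R w) = w := fun w => LinearMap.congr_fun hR0 w
  -- extended map
  let K : X × (Y × (Fin n → ℝ)) → Z := fun p => G (p.1, p.2.1) + R p.2.2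
  have hK0 : K (0, (0, 0)) = 0 := by simp [K, hG00]
  have hKat : ContDiffAt ℝ 1 K (0, (0, 0)) := by
    have h1 : ContDiffAt ℝ 1 (fun p : X × (Y × (Fin n → ℝ)) => (p.1, p.2.1)) (0, (0, 0)) := by
      fun_prop
    have h2 : ContDiffAt ℝ 1 (fun p : X × (Y × (Fin n → ℝ)) => R p.2.2) (0, (0, 0)) := by
      fun_prop
    exact (ContDiffAt.comp (g := G) ((0, (0, 0)) : X × (Y × (Fin n → ℝ))) hGat h1).add h2
  have hK' : ∀ p, fderiv ℝ K (0, (0, 0)) p = G' (p.1, p.2.1) + R p.2.2 := by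
    intro p
    let L : X × (Y × (Fin n → ℝ)) →L[ℝ] X × Y :=
      (ContinuousLinearMap.fst ℝ X (Y × (Fin n → ℝ))).prod
        ((ContinuousLinearMap.fst ℝ Y (Fin n → ℝ)).comp
          (ContinuousLinearMap.snd ℝ X (Y × (Fin n → ℝ))))
    let M : X × (Y × (Fin n → ℝ)) →L[ℝ] Z :=
      R.comp ((ContinuousLinearMap.snd ℝ Y (Fin n → ℝ)).comp
          (ContinuousLinearMap.snd ℝ X (Y × (Fin n → ℝ))))
    have h1 : HasFDerivAt (G ∘ L) (G'.comp L) (0, (0, 0)) :=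
      HasFDerivAt.comp (g := G) ((0, (0, 0)) : X × (Y × (Fin n → ℝ))) hG' L.hasFDerivAt
    have h2 : HasFDerivAt K (G'.comp L + M) (0, (0, 0)) := h1.add M.hasFDerivAt
    rw [h2.fderiv]; rfl
  have hinv : (fderiv ℝ K (0, (0, 0)) ∘L .inr ℝ X (Y × (Fin n → ℝ))).IsInvertible := by
    have hv : ∀ p : Y × (Fin n → ℝ),
        (fderiv ℝ K (0, (0, 0)) ∘L .inr ℝ X (Y × (Fin n → ℝ))) p = DyG p.1 + R p.2 := by
      intro p
      rw [ContinuousLinearMap.comp_apply, hK', ContinuousLinearMap.inr_apply, hGy]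
    have hDD : ∀ y, DzF (DyG y) = 0 := fun y => by rw [← hGy]; exact hFG' _
    have hb : ∀ T : (Y × (Fin n → ℝ)) →L[ℝ] Z, T.ker = ⊥ → T.range = ⊤ → T.IsInvertible :=
      fun T h1 h2 => ⟨ContinuousLinearEquiv.ofBijective T h1 h2,
        ContinuousLinearEquiv.coe_ofBijective T h1 h2⟩
    refine hb _ ?_ ?_
    · rw [LinearMap.ker_eq_bot']
      intro p hp
      have hp' : DyG p.1 + R p.2 = 0 := by rw [← hv]; exact hp
      have h2 : p.2 = 0 := by
        have := congrArg DzF hp'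
        simpa [hDD, hR] using this
      rw [h2, map_zero, add_zero] at hp'
      have h1 : p.1 = 0 := hinj (by rw [hp', map_zero])
      exact Prod.ext h1 h2
    · rw [LinearMap.range_eq_top]
      intro z
      obtain ⟨y, hy⟩ := hker (z - R (DzF z)) (by rw [map_sub, hR, sub_self])
      refine ⟨(y, DzF z), ?_⟩
      refine (hv _).trans ?_
      simp [hy]
  let ψ := hKat.implicitFunction one_ne_zero hinv
  have hψ0 : ψ 0 = 0 := hKat.implicitFunction_apply_self one_ne_zero hinv
  have hψc : ContDiffAt ℝ 1 ψ 0 := hKat.contDiffAt_implicitFunction one_ne_zero hinv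
  have hψe : ∀ᶠ x in nhds (0 : X), K (x, ψ x) = 0 := by
    have := hKat.eventually_apply_implicitFunction one_ne_zero hinv
    rw [hK0] at this
    exact this
  have hψu : ∀ᶠ v in nhds ((0 : X), ((0 : Y), (0 : Fin n → ℝ))), K v = 0 → ψ v.1 = v.2 := by
    have := hKat.eventually_apply_eq_iff_implicitFunction one_ne_zero hinv
    rw [hK0] at this
    exact this.mono fun v hv => hv.1
  have hgc : ContDiffAt ℝ 1 (fun x => (ψ x).1) 0 := contDiffAt_fst.comp (0 : X) hψc
  have hψt : Filter.Tendsto ψ (nhds 0) (nhds 0) := by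
    have := hψc.continuousAt.tendsto
    rwa [hψ0] at this
  have hgt : Filter.Tendsto (fun x => (ψ x).1) (nhds 0) (nhds 0) := by
    have := hgc.continuousAt.tendsto
    simpa [hψ0] using this
  -- the extra component vanishes
  have hGev : ∀ᶠ x in nhds (0 : X), G (x, (ψ x).1) = 0 := by
    obtain ⟨c, hc0, hc⟩ : ∃ c : ℝ, 0 < c ∧ c * ‖R‖ < 1 := by
      refine ⟨(‖R‖ + 1)⁻¹, by positivity, ?_⟩
      rw [inv_mul_lt_iff₀ (by positivity)]
      linarith
    have hst := hF's.isLittleO.def hc0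
    have ht : Filter.Tendsto (fun x : X =>
        (((-R (ψ x).2, x, (ψ x).1), (0, x, (ψ x).1)) : (Z × X × Y) × (Z × X × Y)))
        (nhds 0) (nhds ((0, 0, 0), (0, 0, 0))) := by
      have hid : Filter.Tendsto (fun x : X => x) (nhds 0) (nhds 0) := Filter.tendsto_id
      have h2 : Filter.Tendsto (fun x => -R (ψ x).2) (nhds 0) (nhds 0) := by
        have hcont : Continuous (fun p : Y × (Fin n → ℝ) => -R p.2) := by fun_prop
        have := (hcont.tendsto 0).comp hψt
        simpa [Function.comp_def] using this
      exact (h2.prodMk_nhds (hid.prodMk_nhds hgt)).prodMk_nhds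
        (tendsto_const_nhds.prodMk_nhds (hid.prodMk_nhds hgt))
    filter_upwards [ht.eventually hst, hψe, hU.mem_nhds hU0, hgt.eventually (hV.mem_nhds hV0)]
      with x h1 h2 hxU hxV
    have hGR : G (x, (ψ x).1) = -R (ψ x).2 := eq_neg_of_add_eq_zero_left h2
    have h3 : F (-R (ψ x).2, x, (ψ x).1) = 0 := by rw [← hGR]; exact hFG _ hxU _ hxV
    have h4 : F (0, x, (ψ x).1) = 0 := hF0 _ hxU _ hxV
    have h5 : ((-R (ψ x).2, x, (ψ x).1) : Z × X × Y) - (0, x, (ψ x).1) = (-R (ψ x).2, 0) := by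
      simp
    simp only [h3, h4, h5, hFz, map_neg, hR] at h1
    have h6 : ‖((-R (ψ x).2, 0) : Z × X × Y)‖ = ‖R (ψ x).2‖ := by
      simp [Prod.norm_def]
    rw [h6] at h1
    simp only [sub_zero, sub_neg_eq_add, zero_add] at h1
    have h7 := R.le_opNorm (ψ x).2
    have h8 : ‖(ψ x).2‖ ≤ c * ‖R‖ * ‖(ψ x).2‖ := by
      calc _ ≤ c * ‖R (ψ x).2‖ := h1
        _ ≤ c * (‖R‖ * ‖(ψ x).2‖) := by gcongr
        _ = _ := by ring
    have h9 : (ψ x).2 = 0 := by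
      by_contra hne
      have : 0 < ‖(ψ x).2‖ := norm_pos_iff.2 hne
      nlinarith
    rw [hGR, h9]; simp
  -- neighbourhoods
  have hψu' : ∀ᶠ v in nhds ((0 : X), (0 : Y)), G v = 0 → v.2 = (ψ v.1).1 := by
    have hcont : Continuous (fun v : X × Y => ((v.1, (v.2, 0)) : X × (Y × (Fin n → ℝ)))) := by
      fun_prop
    filter_upwards [(hcont.tendsto (0, 0)).eventually hψu] with v hv hGv
    have := hv (by simp [K, hGv])
    rw [this]
  rw [nhds_prod_eq, Filter.eventually_prod_iff] at hψu'
  obtain ⟨pa, hpa, pb, hpb, hab⟩ := hψu'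
  obtain ⟨V', hV'sub, hV'o, hV'0⟩ := eventually_nhds_iff.1 (hpb.and (hV.mem_nhds hV0))
  obtain ⟨W, hW, hgW⟩ := hgc.contDiffOn (m := 1) le_rfl (by simp)
  obtain ⟨U', hU'sub, hU'o, hU'0⟩ := eventually_nhds_iff.1
    ((hpa.and (hU.mem_nhds hU0)).and ((hGev.and hW).and (hgt.eventually (hV'o.mem_nhds hV'0))))
  have hd := (hgc.differentiableAt one_ne_zero).hasFDerivAt
  refine ⟨U', V', fun x => (ψ x).1, hU'o, hV'o, hU'0, hV'0, fun x hx => (hU'sub x hx).1.2,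
    fun y hy => (hV'sub y hy).2, hgW.mono fun x hx => (hU'sub x hx).2.1.2, by simp [hψ0],
    fun x hx => ⟨(hU'sub x hx).2.2, (hU'sub x hx).2.1.1⟩,
    fun x hx y hy h => hab (hU'sub x hx).1.1 (hV'sub y hy).1 h, _, hd, ?_⟩
  intro x
  have h1 := (hasFDerivAt_id (0 : X)).prodMk hd
  have hG'' : HasFDerivAt G G' (id (0 : X), (ψ 0).1) := by rw [hψ0]; exact hG'
  have h2 := HasFDerivAt.comp (g := G) (0 : X) hG'' h1
  have h3 : HasFDerivAt (G ∘ fun x => (id x, (ψ x).1)) (0 : X →L[ℝ] Z) 0 :=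
    (hasFDerivAt_const (0 : Z) _).congr_of_eventuallyEq hGev
  have h4 := congrArg (fun L => L x) (h2.unique h3)
  rw [← hGx, ← hGy, ← map_add]
  simpa using h4
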